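/- Let F_{n,β}(x) = (1/β) log(∑_{i=1}^n e^{β x_i}) and γₙ the standard Gaussian measure. For 0 < β < √(ln 2 / 2) (indeed for 0 < β < 1/√2), Var_{γₙ}(F_{n,β}) ≤ ((1-β²)/(1-2β²)) · (1/n). -/

import Mathlib

open MeasureTheory ProbabilityTheory

/-- The standard Gaussian measure on `ℝⁿ`. -/
noncomputable def gaussN (n : ℕ) : Measure (Fin n → ℝ) :=
  Measure.pi fun _ => gaussianReal 0 1

/-- The free energy of the Random Energy Model (after normalization):
the log-sum-exp function `F_{n,β}`. -/
noncomputable def freeEnergy (n : ℕ) (β : ℝ) (x : Fin n → ℝ) : ℝ :=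
  (1 / β) * Real.log (∑ i, Real.exp (β * x i))

open scoped ENNReal

namespace REM

lemma pdf_eq (x : ℝ) : gaussianPDFReal 0 1 x = (√(2 * Real.pi))⁻¹ * Real.exp (-x ^ 2 / 2) := by
  simp [gaussianPDFReal]

lemma pdf_deriv (x : ℝ) : HasDerivAt (fun x => - gaussianPDFReal 0 1 x)
    (gaussianPDFReal 0 1 x * x) x := by
  have h : HasDerivAt (fun x : ℝ => -((√(2 * Real.pi))⁻¹ * Real.exp (-x ^ 2 / 2)))
      (-((√(2 * Real.pi))⁻¹ * (Real.exp (-x ^ 2 / 2) * (-(2 * x) / 2)))) x := by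
    have h1 : HasDerivAt (fun x : ℝ => -x ^ 2 / 2) (-(2 * x) / 2) x := by
      have := ((hasDerivAt_pow 2 x).neg).div_const 2
      simpa using this
    exact ((h1.exp).const_mul _).neg
  have e : (fun x => - gaussianPDFReal 0 1 x)
      = fun x : ℝ => -((√(2 * Real.pi))⁻¹ * Real.exp (-x ^ 2 / 2)) := by
    funext x; rw [pdf_eq]
  rw [e, pdf_eq]
  convert h using 1
  ring

lemma pdf_top : Filter.Tendsto (fun x => - gaussianPDFReal 0 1 x) Filter.atTop (nhds 0) := by
  have e : (fun x => - gaussianPDFReal 0 1 x)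
      = fun x : ℝ => -((√(2 * Real.pi))⁻¹ * Real.exp (-(x ^ 2 / 2))) := by
    funext x; rw [pdf_eq]; ring_nf
  rw [e]
  have h : Filter.Tendsto (fun x : ℝ => x ^ 2 / 2) Filter.atTop Filter.atTop :=
    (Filter.tendsto_pow_atTop (by norm_num)).atTop_div_const (by norm_num)
  have := ((Real.tendsto_exp_neg_atTop_nhds_zero.comp h).const_mul ((√(2 * Real.pi))⁻¹)).neg
  simpa using this

lemma pdf_bot : Filter.Tendsto (fun x => - gaussianPDFReal 0 1 x) Filter.atBot (nhds 0) := by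
  have := pdf_top.comp Filter.tendsto_neg_atBot_atTop
  refine this.congr fun x => ?_
  simp [pdf_eq]

lemma int_id : Integrable (fun x : ℝ => x) (gaussianReal 0 1) :=
  (memLp_id_gaussianReal (μ := 0) (v := 1) 1).integrable (by norm_num)

lemma int_pdf : Integrable (fun x : ℝ => gaussianPDFReal 0 1 x * x) volume := by
  have h := int_id
  rw [gaussianReal_of_var_ne_zero 0 one_ne_zero,
    integrable_withDensity_iff_integrable_smul' (measurable_gaussianPDF 0 1)
      (by simp [gaussianPDF])] at h
  refine h.congr (Filter.Eventually.of_forall fun x => ?_)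
  simp [gaussianPDF, ENNReal.toReal_ofReal (gaussianPDFReal_nonneg 0 1 x)]

lemma setInt_id {s : Set ℝ} (hs : MeasurableSet s) :
    ∫ x in s, x ∂(gaussianReal 0 1) = ∫ x in s, gaussianPDFReal 0 1 x * x := by
  rw [gaussianReal_of_var_ne_zero 0 one_ne_zero,
    setIntegral_withDensity_eq_setIntegral_toReal_smul (measurable_gaussianPDF 0 1)
      (by simp [gaussianPDF]) _ hs]
  refine setIntegral_congr_fun hs fun x _ => ?_
  simp [gaussianPDF, ENNReal.toReal_ofReal (gaussianPDFReal_nonneg 0 1 x)]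

lemma int_Ioi (s : ℝ) : ∫ x in Set.Ioi s, x ∂(gaussianReal 0 1) = gaussianPDFReal 0 1 s := by
  rw [setInt_id measurableSet_Ioi,
    integral_Ioi_of_hasDerivAt_of_tendsto' (fun x _ => pdf_deriv x) int_pdf.integrableOn pdf_top]
  ring

lemma int_Iio (s : ℝ) : ∫ x in Set.Iio s, x ∂(gaussianReal 0 1) = - gaussianPDFReal 0 1 s := by
  rw [setInt_id measurableSet_Iio, ← integral_Iic_eq_integral_Iio,
    integral_Iic_of_hasDerivAt_of_tendsto' (fun x _ => pdf_deriv x) int_pdf.integrableOn pdf_bot]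
  ring

lemma weight (s : ℝ) : ∫⁻ x in Set.Ioi s, ∫⁻ y in Set.Iio s, ENNReal.ofReal (x - y)
    ∂(gaussianReal 0 1) ∂(gaussianReal 0 1) ≤ gaussianPDF 0 1 s := by
  set γ := gaussianReal 0 1 with hγ
  set φ := gaussianPDFReal 0 1 s with hφ
  have hφ0 : 0 ≤ φ := gaussianPDFReal_nonneg 0 1 s
  have h1 : ∀ x ∈ Set.Ioi s, ∫⁻ y in Set.Iio s, ENNReal.ofReal (x - y) ∂γ
      = ENNReal.ofReal (x * γ.real (Set.Iio s) + φ) := by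
    intro x hx
    rw [← ofReal_integral_eq_lintegral_ofReal]
    · rw [integral_sub (integrable_const _) int_id.integrableOn, int_Iio]
      simp [hφ, hγ, mul_comm]
    · exact (integrable_const _).sub int_id.integrableOn
    · filter_upwards [ae_restrict_mem measurableSet_Iio] with y hy
      simp only [Set.mem_Ioi, Set.mem_Iio, Pi.zero_apply] at *
      linarith
  rw [setLIntegral_congr_fun measurableSet_Ioi h1, ← ofReal_integral_eq_lintegral_ofReal]
  · rw [gaussianPDF]
    apply ENNReal.ofReal_le_ofReal
    rw [integral_add (int_id.integrableOn.mul_const _) (integrable_const _), integral_mul_const, int_Ioi]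
    have : γ.real (Set.Iio s) + γ.real (Set.Ioi s) ≤ 1 := by
      rw [← measureReal_union (by
        rw [Set.disjoint_left]; intro a ha hb; simp at ha hb; linarith) measurableSet_Ioi]
      exact measureReal_le_one
    simp only [integral_const, smul_eq_mul, measureReal_restrict_apply MeasurableSet.univ, Set.univ_inter]
    rw [← hφ]
    nlinarith
  · exact (int_id.integrableOn.mul_const _).add (integrable_const _)
  · filter_upwards [ae_restrict_mem measurableSet_Ioi] with x hx
    have e : x * γ.real (Set.Iio s) + φ = ∫ y in Set.Iio s, (x - y) ∂γ := by
      rw [integral_sub (integrable_const _) int_id.integrableOn, int_Iio]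
      simp [hφ, hγ, mul_comm]
    rw [e]
    refine setIntegral_nonneg measurableSet_Iio fun y hy => ?_
    simp only [Set.mem_Ioi, Set.mem_Iio] at *
    linarith

lemma cs {f g : ℝ → ℝ} (hf : ∀ x, HasDerivAt f (g x) x) (hg : Continuous g) {x y : ℝ} (h : y < x) :
    (f x - f y) ^ 2 ≤ (x - y) * ∫ s in y..x, g s ^ 2 := by
  have h1 : ∫ s in y..x, g s = f x - f y :=
    intervalIntegral.integral_eq_sub_of_hasDerivAt (fun x _ => hf x) (hg.intervalIntegrable _ _)
  set m := (f x - f y) / (x - y) with hm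
  have hxy : 0 < x - y := sub_pos.2 h
  have hm' : f x - f y = m * (x - y) := by rw [hm]; field_simp
  have h0 : 0 ≤ ∫ s in y..x, (g s - m) ^ 2 :=
    intervalIntegral.integral_nonneg h.le fun _ _ => sq_nonneg _
  have e : ∫ s in y..x, (g s - m) ^ 2
      = (∫ s in y..x, g s ^ 2) - 2 * m * (∫ s in y..x, g s) + m ^ 2 * (x - y) := by
    have : ∀ s, (g s - m) ^ 2 = g s ^ 2 - 2 * m * g s + m ^ 2 := fun s => by ring
    simp_rw [this]
    rw [intervalIntegral.integral_add, intervalIntegral.integral_sub,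
      intervalIntegral.integral_const_mul, intervalIntegral.integral_const]
    · simp [mul_comm]
    all_goals exact Continuous.intervalIntegrable (by fun_prop) _ _
  rw [e, h1] at h0
  rw [hm'] at h0 ⊢
  nlinarith

noncomputable def K (g : ℝ → ℝ) (x y s : ℝ) : ℝ≥0∞ :=
  (Set.Ioi s).indicator (fun x => (Set.Iio s).indicator (fun y => ENNReal.ofReal (x - y)) y) x
    * ENNReal.ofReal (g s ^ 2)

lemma K_meas {g : ℝ → ℝ} (hg : Continuous g) : Measurable fun p : ℝ × ℝ × ℝ => K g p.1 p.2.1 p.2.2 := by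
  have e : (fun p : ℝ × ℝ × ℝ => K g p.1 p.2.1 p.2.2) = fun p =>
      (if p.2.2 < p.1 then if p.2.1 < p.2.2 then ENNReal.ofReal (p.1 - p.2.1) else 0 else 0)
        * ENNReal.ofReal (g p.2.2 ^ 2) := by
    funext p
    simp [K, Set.indicator]
  rw [e]
  refine Measurable.mul ?_ (by fun_prop)
  refine Measurable.ite (measurableSet_lt (by fun_prop) (by fun_prop)) ?_ (by fun_prop)
  exact Measurable.ite (measurableSet_lt (by fun_prop) (by fun_prop)) (by fun_prop) (by fun_prop)

lemma ptw {f g : ℝ → ℝ} (hf : ∀ x, HasDerivAt f (g x) x) (hg : Continuous g) {x y : ℝ} (h : y < x) :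
    ENNReal.ofReal ((f x - f y) ^ 2) ≤ ∫⁻ s, K g x y s := by
  have e : ∀ s, K g x y s = (Set.Ioo y x).indicator
      (fun s => ENNReal.ofReal (x - y) * ENNReal.ofReal (g s ^ 2)) s := by
    intro s
    by_cases h1 : y < s <;> by_cases h2 : s < x <;> simp [K, Set.indicator, h1, h2]
  simp_rw [e]
  rw [lintegral_indicator measurableSet_Ioo, lintegral_const_mul _ (by fun_prop),
    ← ofReal_integral_eq_lintegral_ofReal, ← ENNReal.ofReal_mul (sub_pos.2 h).le]
  · apply ENNReal.ofReal_le_ofReal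
    rw [← integral_Ioc_eq_integral_Ioo, ← intervalIntegral.integral_of_le h.le]
    exact cs hf hg h
  · exact ((by fun_prop : Continuous fun s => g s ^ 2).integrableOn_Icc (a := y) (b := x)).mono_set
      Set.Ioo_subset_Icc_self
  · exact Filter.Eventually.of_forall fun _ => sq_nonneg _

lemma poinc1 {f g : ℝ → ℝ} (hf : ∀ x, HasDerivAt f (g x) x) (hg : Continuous g) :
    ∫⁻ x, ∫⁻ y, ENNReal.ofReal ((f x - f y) ^ 2) ∂(gaussianReal 0 1) ∂(gaussianReal 0 1)
      ≤ 2 * ∫⁻ x, ENNReal.ofReal (g x ^ 2) ∂(gaussianReal 0 1) := by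
  set γ := gaussianReal 0 1 with hγ
  have hK := K_meas hg
  have hI : ∫⁻ x, ∫⁻ y, (∫⁻ s, K g x y s) ∂γ ∂γ ≤ ∫⁻ x, ENNReal.ofReal (g x ^ 2) ∂γ := by
    calc ∫⁻ x, ∫⁻ y, (∫⁻ s, K g x y s) ∂γ ∂γ
        = ∫⁻ x, (∫⁻ s, ∫⁻ y, K g x y s ∂γ) ∂γ := by
          refine lintegral_congr fun x => ?_
          refine lintegral_lintegral_swap (Measurable.aemeasurable ?_)
          exact hK.comp (measurable_const.prodMk (measurable_fst.prodMk measurable_snd))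
      _ = ∫⁻ s, ∫⁻ x, ∫⁻ y, K g x y s ∂γ ∂γ := by
          refine lintegral_lintegral_swap (Measurable.aemeasurable ?_)
          refine Measurable.lintegral_prod_right' (f := fun q : (ℝ × ℝ) × ℝ => K g q.1.1 q.2 q.1.2) ?_
          exact hK.comp (by fun_prop : Measurable fun q : (ℝ × ℝ) × ℝ => (q.1.1, q.2, q.1.2))
      _ = ∫⁻ s, (∫⁻ x in Set.Ioi s, ∫⁻ y in Set.Iio s, ENNReal.ofReal (x - y) ∂γ ∂γ)
            * ENNReal.ofReal (g s ^ 2) := by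
          refine lintegral_congr fun s => ?_
          have : ∀ x, ∫⁻ y, K g x y s ∂γ = (Set.Ioi s).indicator (fun x =>
              ∫⁻ y in Set.Iio s, ENNReal.ofReal (x - y) ∂γ) x * ENNReal.ofReal (g s ^ 2) := by
            intro x
            unfold K
            rw [lintegral_mul_const' _ _ ENNReal.ofReal_ne_top]
            congr 1
            by_cases h : s < x
            · simp only [Set.mem_Ioi, h, Set.indicator_of_mem]
              rw [lintegral_indicator measurableSet_Iio]
            · simp [h]
          simp_rw [this]
          rw [lintegral_mul_const' _ _ ENNReal.ofReal_ne_top, lintegral_indicator measurableSet_Ioi]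
      _ ≤ ∫⁻ s, gaussianPDF 0 1 s * ENNReal.ofReal (g s ^ 2) := by
          refine lintegral_mono fun s => ?_
          exact mul_le_mul_left (weight s) _
      _ = ∫⁻ x, ENNReal.ofReal (g x ^ 2) ∂γ := by
          rw [hγ, gaussianReal_of_var_ne_zero 0 one_ne_zero,
            lintegral_withDensity_eq_lintegral_mul _ (measurable_gaussianPDF 0 1) (by fun_prop)]
          rfl
  have hm2 : Measurable fun p : ℝ × ℝ => ∫⁻ s, K g p.1 p.2 s :=
    Measurable.lintegral_prod_right' (f := fun q : (ℝ × ℝ) × ℝ => K g q.1.1 q.1.2 q.2)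
      (hK.comp (by fun_prop : Measurable fun q : (ℝ × ℝ) × ℝ => (q.1.1, q.1.2, q.2)))
  calc ∫⁻ x, ∫⁻ y, ENNReal.ofReal ((f x - f y) ^ 2) ∂γ ∂γ
      ≤ ∫⁻ x, ∫⁻ y, ((∫⁻ s, K g x y s) + ∫⁻ s, K g y x s) ∂γ ∂γ := by
        refine lintegral_mono fun x => lintegral_mono fun y => ?_
        rcases lt_trichotomy y x with h | h | h
        · exact (ptw hf hg h).trans le_self_add
        · simp [h]
        · have := ptw hf hg h
          rw [← neg_sub, neg_sq]
          exact this.trans le_add_self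
    _ = (∫⁻ x, ∫⁻ y, (∫⁻ s, K g x y s) ∂γ ∂γ) + ∫⁻ x, ∫⁻ y, (∫⁻ s, K g y x s) ∂γ ∂γ := by
        rw [← lintegral_add_left (Measurable.lintegral_prod_right' hm2)]
        refine lintegral_congr fun x => ?_
        rw [lintegral_add_left]
        exact hm2.comp (measurable_const.prodMk measurable_id)
    _ ≤ 2 * ∫⁻ x, ENNReal.ofReal (g x ^ 2) ∂γ := by
        rw [two_mul]
        refine add_le_add hI (le_trans (le_of_eq ?_) hI)
        exact lintegral_lintegral_swap (f := fun x y => ∫⁻ s, K g y x s)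
          (hm2.comp measurable_swap).aemeasurable

lemma quad {A B : Type*} [MeasurableSpace A] [MeasurableSpace B] (μ : Measure A) (ν : Measure B)
    [IsProbabilityMeasure μ] [IsProbabilityMeasure ν] {f : A × B → ℝ} (hf : Measurable f) :
    ∫⁻ p, ∫⁻ q, ENNReal.ofReal ((f p - f q) ^ 2) ∂(μ.prod ν) ∂(μ.prod ν)
      ≤ (∫⁻ b, ∫⁻ a, ∫⁻ a', ENNReal.ofReal ((f (a, b) - f (a', b)) ^ 2) ∂μ ∂μ ∂ν)
        + ∫⁻ a, ∫⁻ b, ∫⁻ b', ENNReal.ofReal ((f (a, b) - f (a, b')) ^ 2) ∂ν ∂ν ∂μ := by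
  set V := ∫⁻ p, ∫⁻ q, ENNReal.ofReal ((f p - f q) ^ 2) ∂(μ.prod ν) ∂(μ.prod ν) with hV
  set X := ∫⁻ b, ∫⁻ a, ∫⁻ a', ENNReal.ofReal ((f (a, b) - f (a', b)) ^ 2) ∂μ ∂μ ∂ν with hX
  set Y := ∫⁻ a, ∫⁻ b, ∫⁻ b', ENNReal.ofReal ((f (a, b) - f (a, b')) ^ 2) ∂ν ∂ν ∂μ with hY
  set P := (μ.prod μ).prod (ν.prod ν) with hP
  have hV1 : ∫⁻ p, ENNReal.ofReal ((f (p.1.1, p.2.1) - f (p.1.2, p.2.2)) ^ 2) ∂P = V := by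
    rw [hP, lintegral_prod _ (by fun_prop), lintegral_prod _ (by fun_prop), hV,
      lintegral_prod _ (by fun_prop)]
    refine lintegral_congr fun a => ?_
    have : ∀ a', ∫⁻ y : B × B, ENNReal.ofReal ((f (a, y.1) - f (a', y.2)) ^ 2) ∂(ν.prod ν)
        = ∫⁻ b, ∫⁻ b', ENNReal.ofReal ((f (a, b) - f (a', b')) ^ 2) ∂ν ∂ν := fun a' =>
      lintegral_prod _ (by fun_prop)
    simp only [this]
    rw [lintegral_lintegral_swap]
    · refine lintegral_congr fun b => ?_
      rw [lintegral_prod _ (by fun_prop)]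
    · refine Measurable.aemeasurable ?_
      refine Measurable.lintegral_prod_right' (f := fun q : (A × B) × B =>
        ENNReal.ofReal ((f (a, q.1.2) - f (q.1.1, q.2)) ^ 2)) (by fun_prop)
  have hV2 : ∫⁻ p, ENNReal.ofReal ((f (p.1.2, p.2.1) - f (p.1.1, p.2.2)) ^ 2) ∂P = V := by
    rw [← hV1]
    have hmp : MeasurePreserving (Prod.map Prod.swap id) P P :=
      (Measure.measurePreserving_swap (μ := μ) (ν := μ)).prod (MeasurePreserving.id (ν.prod ν))
    rw [← hmp.lintegral_comp (by fun_prop)]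
    rfl
  have hX1 : ∫⁻ p, ENNReal.ofReal ((f (p.1.1, p.2.1) - f (p.1.2, p.2.1)) ^ 2) ∂P = X := by
    rw [hP, lintegral_prod_symm _ (by fun_prop), lintegral_prod _ (by fun_prop), hX]
    refine lintegral_congr fun b => ?_
    simp only [lintegral_const, measure_univ, mul_one]
    rw [lintegral_prod _ (by fun_prop)]
  have hX2 : ∫⁻ p, ENNReal.ofReal ((f (p.1.1, p.2.2) - f (p.1.2, p.2.2)) ^ 2) ∂P = X := by
    rw [hP, lintegral_prod_symm _ (by fun_prop), lintegral_prod _ (by fun_prop), hX]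
    simp only [lintegral_const, measure_univ, mul_one]
    refine lintegral_congr fun b => ?_
    rw [lintegral_prod _ (by fun_prop)]
  have hY1 : ∫⁻ p, ENNReal.ofReal ((f (p.1.1, p.2.1) - f (p.1.1, p.2.2)) ^ 2) ∂P = Y := by
    rw [hP, lintegral_prod _ (by fun_prop), lintegral_prod _ (by fun_prop), hY]
    refine lintegral_congr fun b => ?_
    simp only [lintegral_const, measure_univ, mul_one]
    rw [lintegral_prod _ (by fun_prop)]
  have hY2 : ∫⁻ p, ENNReal.ofReal ((f (p.1.2, p.2.1) - f (p.1.2, p.2.2)) ^ 2) ∂P = Y := by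
    rw [hP, lintegral_prod _ (by fun_prop), lintegral_prod _ (by fun_prop), hY]
    simp only [lintegral_const, measure_univ, mul_one]
    refine lintegral_congr fun b => ?_
    rw [lintegral_prod _ (by fun_prop)]
  have main : V + V ≤ (X + X) + (Y + Y) := by
    conv_lhs => rw [← hV1]
    conv_lhs => arg 2; rw [hV1, ← hV2]
    conv_rhs => arg 1; arg 1; rw [← hX1]
    conv_rhs => arg 1; arg 2; rw [← hX2]
    conv_rhs => arg 2; arg 1; rw [← hY1]
    conv_rhs => arg 2; arg 2; rw [← hY2]
    rw [← lintegral_add_left (by fun_prop), ← lintegral_add_left (by fun_prop),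
      ← lintegral_add_left (by fun_prop), ← lintegral_add_left (by fun_prop)]
    refine lintegral_mono fun p => ?_
    dsimp only
    rw [← ENNReal.ofReal_add (by positivity) (by positivity),
      ← ENNReal.ofReal_add (by positivity) (by positivity),
      ← ENNReal.ofReal_add (by positivity) (by positivity),
      ← ENNReal.ofReal_add (by positivity) (by positivity)]
    apply ENNReal.ofReal_le_ofReal
    nlinarith [sq_nonneg (f (p.1.1, p.2.1) + f (p.1.2, p.2.2) - f (p.1.2, p.2.1) - f (p.1.1, p.2.2))]
  have m2 : 2 * V ≤ 2 * (X + Y) := by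
    calc 2 * V = V + V := two_mul V
      _ ≤ (X + X) + (Y + Y) := main
      _ = 2 * (X + Y) := by ring
  exact (ENNReal.mul_le_mul_iff_right (by norm_num) (by norm_num)).1 m2

instance (n : ℕ) : IsProbabilityMeasure (gaussN n) := by unfold gaussN; infer_instance

lemma cons_mp (n : ℕ) : MeasurePreserving
    (fun p : ℝ × (Fin n → ℝ) => (Fin.cons p.1 p.2 : Fin (n + 1) → ℝ))
    ((gaussianReal 0 1).prod (gaussN n)) (gaussN (n + 1)) := by
  have h := (measurePreserving_piFinSuccAbove (fun _ : Fin (n + 1) => gaussianReal 0 1) 0).symm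
  convert h using 1
  · funext p
    simp [MeasurableEquiv.piFinSuccAbove, Fin.insertNthEquiv]
  · rfl
  · rfl

lemma poincN (n : ℕ) : ∀ (f : (Fin n → ℝ) → ℝ) (g : Fin n → (Fin n → ℝ) → ℝ), Measurable f →
    (∀ i, Continuous (g i)) →
    (∀ x i, HasDerivAt (fun t => f (Function.update x i t)) (g i x) (x i)) →
    ∫⁻ x, ∫⁻ y, ENNReal.ofReal ((f x - f y) ^ 2) ∂(gaussN n) ∂(gaussN n)
      ≤ 2 * ∫⁻ x, ∑ i, ENNReal.ofReal (g i x ^ 2) ∂(gaussN n) := by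
  induction n with
  | zero =>
    intro f g _ _ _
    have : ∀ x y : Fin 0 → ℝ, f x - f y = 0 := fun x y => by
      rw [Subsingleton.elim x y, sub_self]
    simp [this]
  | succ n ih =>
    intro f g hf hg hd
    have hmp := cons_mp n
    have hc : Continuous (fun p : ℝ × (Fin n → ℝ) => (Fin.cons p.1 p.2 : Fin (n + 1) → ℝ)) := by
      fun_prop
    set γ := gaussianReal 0 1 with hγ
    have hgm : ∀ i, Measurable (g i) := fun i => (hg i).measurable
    have hmeas : Measurable fun x => ∫⁻ y, ENNReal.ofReal ((f x - f y) ^ 2) ∂(gaussN (n + 1)) :=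
      Measurable.lintegral_prod_right' (f := fun q : (Fin (n+1) → ℝ) × (Fin (n+1) → ℝ) =>
        ENNReal.ofReal ((f q.1 - f q.2) ^ 2)) (by fun_prop)
    rw [← hmp.lintegral_comp hmeas, ← hmp.lintegral_comp (by fun_prop)]
    have : ∀ x : Fin (n + 1) → ℝ, ∫⁻ y, ENNReal.ofReal ((f x - f y) ^ 2) ∂(gaussN (n + 1))
        = ∫⁻ q, ENNReal.ofReal ((f x - f (Fin.cons q.1 q.2)) ^ 2) ∂(γ.prod (gaussN n)) := fun x => by
      rw [← hmp.lintegral_comp (by fun_prop)]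
    simp only [this]
    have hfc : Measurable fun p : ℝ × (Fin n → ℝ) => f (Fin.cons p.1 p.2) := hf.comp hc.measurable
    refine (quad γ (gaussN n) hfc).trans ?_
    simp only [Fin.sum_univ_succ]
    have hgc : ∀ i, Measurable fun p : ℝ × (Fin n → ℝ) => g i (Fin.cons p.1 p.2) :=
      fun i => (hgm i).comp hc.measurable
    rw [lintegral_add_left ((hgc 0).pow_const 2).ennreal_ofReal, mul_add]
    refine add_le_add ?_ ?_
    · rw [lintegral_prod_symm _ ((hgc 0).pow_const 2).ennreal_ofReal.aemeasurable,
        ← lintegral_const_mul' _ _ (by norm_num)]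
      refine lintegral_mono fun b => ?_
      refine poinc1 (f := fun t => f (Fin.cons t b)) (g := fun t => g 0 (Fin.cons t b)) ?_ ?_
      · intro t
        have := hd (Fin.cons t b) 0
        simpa [Fin.update_cons_zero] using this
      · exact (hg 0).comp (hc.comp (by fun_prop : Continuous fun t : ℝ => (t, b)))
    · rw [lintegral_prod _ (Finset.measurable_sum _ fun i _ =>
          ((hgc i.succ).pow_const 2).ennreal_ofReal).aemeasurable,
        ← lintegral_const_mul' _ _ (by norm_num)]
      refine lintegral_mono fun a => ?_
      refine ih (fun x => f (Fin.cons a x)) (fun i x => g i.succ (Fin.cons a x)) ?_ ?_ ?_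
      · exact hfc.comp measurable_prodMk_left
      · intro i
        exact (hg _).comp (hc.comp (by fun_prop : Continuous fun x : Fin n → ℝ => (a, x)))
      · intro x i
        have := hd (Fin.cons a x) i.succ
        simpa [Fin.cons_update] using this

lemma varPoinc {n : ℕ} {f : (Fin n → ℝ) → ℝ} {g : Fin n → (Fin n → ℝ) → ℝ} (hf : Measurable f)
    (hg : ∀ i, Continuous (g i))
    (hd : ∀ x i, HasDerivAt (fun t => f (Function.update x i t)) (g i x) (x i))
    (hf2 : Integrable (fun x => f x ^ 2) (gaussN n))
    (hg2 : Integrable (fun x => ∑ i, g i x ^ 2) (gaussN n)) :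
    (∫ x, f x ^ 2 ∂(gaussN n)) - (∫ x, f x ∂(gaussN n)) ^ 2
      ≤ ∫ x, ∑ i, g i x ^ 2 ∂(gaussN n) := by
  have h := poincN n f g hf hg hd
  set μ := gaussN n with hμ
  have hf1 : Integrable f μ :=
    ((memLp_two_iff_integrable_sq hf.aestronglyMeasurable).2 hf2).integrable (by norm_num)
  set m := ∫ x, f x ∂μ with hm
  set s := ∫ x, f x ^ 2 ∂μ with hs
  have e1 : ∀ x, ∫ y, (f x - f y) ^ 2 ∂μ = f x ^ 2 - 2 * f x * m + s := by
    intro x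
    have : ∀ y, (f x - f y) ^ 2 = f x ^ 2 - 2 * f x * f y + f y ^ 2 := fun y => by ring
    simp_rw [this]
    have j1 : Integrable (fun y => f x ^ 2 - 2 * f x * f y) μ :=
      (integrable_const _).sub (hf1.const_mul _)
    rw [integral_add j1 hf2,
      integral_sub (integrable_const _) (hf1.const_mul _), integral_const_mul]
    simp [hm, hs, hμ]
  have i1 : ∀ x, Integrable (fun y => (f x - f y) ^ 2) μ := by
    intro x
    have : (fun y => (f x - f y) ^ 2) = fun y => f x ^ 2 - 2 * f x * f y + f y ^ 2 := by
      funext y; ring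
    rw [this]
    exact ((integrable_const _).sub (hf1.const_mul _)).add hf2
  have i2 : Integrable (fun x => f x ^ 2 - 2 * f x * m + s) μ :=
    (hf2.sub ((hf1.const_mul 2).mul_const m)).add (integrable_const _)
  have e2 : ∫ x, (f x ^ 2 - 2 * f x * m + s) ∂μ = 2 * (s - m ^ 2) := by
    have j1 : Integrable (fun x => f x ^ 2 - 2 * f x * m) μ :=
      hf2.sub ((hf1.const_mul 2).mul_const m)
    rw [integral_add j1 (integrable_const _),
      integral_sub hf2 ((hf1.const_mul 2).mul_const m), integral_mul_const, integral_const_mul]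
    simp only [integral_const, probReal_univ, smul_eq_mul, one_mul]
    rw [← hm, ← hs]; ring
  have l1 : ∀ x, ∫⁻ y, ENNReal.ofReal ((f x - f y) ^ 2) ∂μ
      = ENNReal.ofReal (f x ^ 2 - 2 * f x * m + s) := by
    intro x
    rw [← e1, ofReal_integral_eq_lintegral_ofReal (i1 x)
      (Filter.Eventually.of_forall fun _ => sq_nonneg _)]
  simp_rw [l1] at h
  rw [← ofReal_integral_eq_lintegral_ofReal i2 (Filter.Eventually.of_forall fun x => by
    show 0 ≤ f x ^ 2 - 2 * f x * m + s
    rw [← e1]; exact integral_nonneg fun _ => sq_nonneg _), e2] at h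
  have l2 : ∀ x, ∑ i, ENNReal.ofReal (g i x ^ 2) = ENNReal.ofReal (∑ i, g i x ^ 2) := fun x =>
    (ENNReal.ofReal_sum_of_nonneg fun _ _ => sq_nonneg _).symm
  simp_rw [l2] at h
  have nn : ∀ x, 0 ≤ ∑ i, g i x ^ 2 := fun x => Finset.sum_nonneg fun _ _ => sq_nonneg _
  rw [← ofReal_integral_eq_lintegral_ofReal hg2 (Filter.Eventually.of_forall nn),
    show (2 : ℝ≥0∞) = ENNReal.ofReal 2 by simp, ← ENNReal.ofReal_mul (by norm_num),
    ENNReal.ofReal_le_ofReal_iff (mul_nonneg (by norm_num) (integral_nonneg_of_ae (Filter.Eventually.of_forall nn)))] at h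
  linarith

noncomputable def Z {n : ℕ} (β : ℝ) (x : Fin n → ℝ) : ℝ := ∑ i, Real.exp (β * x i)

noncomputable def p {n : ℕ} (β : ℝ) (i : Fin n) (x : Fin n → ℝ) : ℝ := Real.exp (β * x i) / Z β x

lemma Z_pos {n : ℕ} (i : Fin n) (β : ℝ) (x : Fin n → ℝ) : 0 < Z β x :=
  Finset.sum_pos (fun _ _ => Real.exp_pos _) ⟨i, Finset.mem_univ i⟩

lemma Z_cont {n : ℕ} (β : ℝ) : Continuous (Z (n := n) β) := by unfold Z; fun_prop

lemma p_cont {n : ℕ} (β : ℝ) (i : Fin n) : Continuous (p β i) := by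
  unfold p
  exact Continuous.div (by fun_prop) (Z_cont β) fun x => (Z_pos i β x).ne'

lemma p_nonneg {n : ℕ} (β : ℝ) (i : Fin n) (x : Fin n → ℝ) : 0 ≤ p β i x :=
  div_nonneg (Real.exp_pos _).le (Z_pos i β x).le

lemma p_sum {n : ℕ} (hn : 0 < n) (β : ℝ) (x : Fin n → ℝ) : ∑ i, p β i x = 1 := by
  unfold p
  rw [← Finset.sum_div]
  exact div_self (Z_pos ⟨0, hn⟩ β x).ne'

lemma p_le {n : ℕ} (β : ℝ) (i : Fin n) (x : Fin n → ℝ) : p β i x ≤ 1 := by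
  rw [← p_sum i.pos β x]
  exact Finset.single_le_sum (f := fun i => p β i x) (fun i _ => p_nonneg β i x) (Finset.mem_univ i)

lemma e_deriv {n : ℕ} (β : ℝ) (x : Fin n → ℝ) (i j : Fin n) :
    HasDerivAt (fun t => Real.exp (β * Function.update x i t j))
      (if j = i then β * Real.exp (β * x i) else 0) (x i) := by
  by_cases h : j = i
  · subst h
    simp only [Function.update_self, if_true]
    have := ((hasDerivAt_id (x j)).const_mul β).exp
    simpa [mul_comm] using this
  · simp only [Function.update_of_ne h, if_neg h]
    exact hasDerivAt_const _ _

lemma Z_deriv {n : ℕ} (β : ℝ) (x : Fin n → ℝ) (i : Fin n) :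
    HasDerivAt (fun t => Z β (Function.update x i t)) (β * Real.exp (β * x i)) (x i) := by
  have := HasDerivAt.fun_sum (u := Finset.univ) fun j _ => e_deriv β x i j
  simpa [Z] using this

lemma F_deriv {n : ℕ} (β : ℝ) (hβ : 0 < β) (x : Fin n → ℝ) (i : Fin n) :
    HasDerivAt (fun t => freeEnergy n β (Function.update x i t)) (p β i x) (x i) := by
  have h := ((Z_deriv β x i).log (by
    rw [Function.update_eq_self]; exact (Z_pos i β x).ne')).const_mul (1 / β)
  rw [Function.update_eq_self] at h
  refine h.congr_deriv ?_
  unfold p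
  field_simp

noncomputable def dp {n : ℕ} (β : ℝ) (i j : Fin n) (x : Fin n → ℝ) : ℝ :=
  β * ((if i = j then p β i x else 0) - p β i x * p β j x)

lemma p_deriv {n : ℕ} (β : ℝ) (x : Fin n → ℝ) (i j : Fin n) :
    HasDerivAt (fun t => p β i (Function.update x j t)) (dp β i j x) (x j) := by
  have hz := (Z_pos i β x).ne'
  have h := (e_deriv β x j i).div (Z_deriv β x j) (by
    rw [Function.update_eq_self]; exact hz)
  rw [Function.update_eq_self] at h
  refine h.congr_deriv ?_
  unfold dp p
  by_cases hij : i = j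
  · subst hij
    simp only [if_true]
    field_simp
  · simp only [if_neg hij]
    field_simp
    ring

lemma dp_cont {n : ℕ} (β : ℝ) (i j : Fin n) : Continuous (dp β i j) := by
  have h1 := p_cont β i
  have h2 := p_cont β j
  unfold dp
  by_cases hij : i = j
  · simp only [if_pos hij]; fun_prop
  · simp only [if_neg hij]; fun_prop

lemma dp_sum {n : ℕ} (hn : 0 < n) (β : ℝ) (x : Fin n → ℝ) :
    ∑ i, ∑ j, dp β i j x ^ 2 ≤ β ^ 2 * ∑ i, p β i x ^ 2 := by
  set S := ∑ i, p β i x ^ 2 with hS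
  have h1 : ∀ i, ∑ j, dp β i j x ^ 2
      = β ^ 2 * (p β i x ^ 2 - 2 * p β i x ^ 3 + p β i x ^ 2 * S) := by
    intro i
    have : ∀ j, dp β i j x ^ 2 = β ^ 2 * ((if i = j then p β i x ^ 2 - 2 * p β i x ^ 3 else 0)
        + p β i x ^ 2 * p β j x ^ 2) := by
      intro j
      unfold dp
      by_cases hij : i = j
      · subst hij; simp only [if_true]; ring
      · simp only [if_neg hij]; ring
    simp_rw [this]
    rw [← Finset.mul_sum, Finset.sum_add_distrib, ← Finset.mul_sum]
    simp [hS]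
  simp_rw [h1]
  rw [← Finset.mul_sum, Finset.sum_add_distrib, Finset.sum_sub_distrib, ← Finset.mul_sum,
    ← Finset.sum_mul, ← hS]
  have h2 : 0 ≤ ∑ i, p β i x * (p β i x - S) ^ 2 :=
    Finset.sum_nonneg fun i _ => mul_nonneg (p_nonneg β i x) (sq_nonneg _)
  have h3 : ∑ i, p β i x * (p β i x - S) ^ 2 = (∑ i, p β i x ^ 3) - 2 * S * S + S ^ 2 := by
    have : ∀ i, p β i x * (p β i x - S) ^ 2
        = p β i x ^ 3 - 2 * S * p β i x ^ 2 + S ^ 2 * p β i x := fun i => by ring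
    simp_rw [this]
    rw [Finset.sum_add_distrib, Finset.sum_sub_distrib, ← Finset.mul_sum, ← Finset.mul_sum,
      p_sum hn, ← hS, mul_one]
  have h4 : ∑ i, p β i x ^ 3 ≥ S ^ 2 := by nlinarith
  have h5 : 0 ≤ S ^ 2 := sq_nonneg _
  apply mul_le_mul_of_nonneg_left _ (sq_nonneg β)
  nlinarith

lemma bdd_int {n : ℕ} {h : (Fin n → ℝ) → ℝ} (hc : Continuous h) (C : ℝ) (hC : ∀ x, |h x| ≤ C) :
    Integrable h (gaussN n) :=
  Integrable.of_bound hc.aestronglyMeasurable C (Filter.Eventually.of_forall hC)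

lemma p_int {n : ℕ} (β : ℝ) (i : Fin n) : Integrable (p β i) (gaussN n) :=
  bdd_int (p_cont β i) 1 fun x => by rw [abs_of_nonneg (p_nonneg β i x)]; exact p_le β i x

lemma p2_int {n : ℕ} (β : ℝ) (i : Fin n) : Integrable (fun x => p β i x ^ 2) (gaussN n) :=
  bdd_int ((p_cont β i).pow 2) 1 fun x => by
    rw [abs_of_nonneg (sq_nonneg _)]; exact pow_le_one₀ (p_nonneg β i x) (p_le β i x)

lemma dp2_int {n : ℕ} (β : ℝ) (i j : Fin n) : Integrable (fun x => dp β i j x ^ 2) (gaussN n) :=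
  bdd_int ((dp_cont β i j).pow 2) (β ^ 2) fun x => by
    rw [abs_of_nonneg (sq_nonneg _)]
    unfold dp
    rw [mul_pow]
    have a1 := p_nonneg β i x
    have a2 := p_nonneg β j x
    have a3 := p_le β i x
    have a4 := p_le β j x
    have a5 := mul_nonneg a1 a2
    have a6 : p β i x * p β j x ≤ 1 := mul_le_one₀ a3 a2 a4
    refine mul_le_of_le_one_right (sq_nonneg _) ?_
    rw [sq_le_one_iff_abs_le_one, abs_le]
    split_ifs <;> constructor <;> linarith

lemma p_mean {n : ℕ} (hn : 0 < n) (β : ℝ) (i : Fin n) : ∫ x, p β i x ∂(gaussN n) = 1 / n := by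
  have sym : ∀ j, ∫ x, p β j x ∂(gaussN n) = ∫ x, p β i x ∂(gaussN n) := by
    intro j
    have hmp := measurePreserving_arrowCongr' 
      (fun _ : Fin n => gaussianReal 0 1) (fun _ => gaussianReal 0 1)
      (Equiv.swap i j) (MeasurableEquiv.refl ℝ)
      (fun _ => MeasurePreserving.id _)
    have h := hmp.integral_comp' (g := p β i)
    unfold gaussN
    rw [← h]
    refine integral_congr_ae (Filter.Eventually.of_forall fun x => ?_)
    have e : ∀ k, (MeasurableEquiv.arrowCongr' (Equiv.swap i j) (MeasurableEquiv.refl ℝ)) x k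
        = x (Equiv.swap i j k) := by
      intro k
      simp [MeasurableEquiv.arrowCongr', Equiv.arrowCongr']
    simp only [p, Z, e, Equiv.swap_apply_left]
    congr 1
    exact (Equiv.sum_comp (Equiv.swap i j) fun k => Real.exp (β * x k)).symm
  have h1 : ∑ j, ∫ x, p β j x ∂(gaussN n) = 1 := by
    rw [← integral_finsetSum _ fun j _ => p_int β j]
    simp [p_sum hn]
  simp only [sym, Finset.sum_const, Finset.card_univ, Fintype.card_fin, nsmul_eq_mul] at h1
  have : (n : ℝ) ≠ 0 := by positivity
  field_simp
  linarith

lemma Q_bound {n : ℕ} (hn : 0 < n) (β : ℝ) :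
    (1 - β ^ 2) * ∫ x, ∑ i, p β i x ^ 2 ∂(gaussN n) ≤ 1 / n := by
  have h : ∀ i, (∫ x, p β i x ^ 2 ∂(gaussN n)) - (1 / n) ^ 2
      ≤ ∫ x, ∑ j, dp β i j x ^ 2 ∂(gaussN n) := by
    intro i
    rw [← p_mean hn β i]
    exact varPoinc (p_cont β i).measurable (fun j => dp_cont β i j) (fun x j => p_deriv β x i j)
      (p2_int β i) (integrable_finsetSum _ fun j _ => dp2_int β i j)
  have hs := Finset.sum_le_sum fun i (_ : i ∈ Finset.univ) => h i
  rw [Finset.sum_sub_distrib, ← integral_finsetSum _ fun j _ => p2_int β j,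
    ← integral_finsetSum _ fun i _ => integrable_finsetSum _ fun j _ => dp2_int β i j] at hs
  have hle : ∫ x, ∑ i, ∑ j, dp β i j x ^ 2 ∂(gaussN n)
      ≤ ∫ x, β ^ 2 * ∑ i, p β i x ^ 2 ∂(gaussN n) :=
    integral_mono (integrable_finsetSum _ fun i _ => integrable_finsetSum _ fun j _ => dp2_int β i j)
      ((integrable_finsetSum _ fun j _ => p2_int β j).const_mul _) fun x => dp_sum hn β x
  rw [integral_const_mul] at hle
  have hc : ∑ _i : Fin n, (1 / (n : ℝ)) ^ 2 = 1 / (n : ℝ) := by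
    have : (n : ℝ) ≠ 0 := by positivity
    simp
    field_simp
  rw [hc] at hs
  linarith

end REM

theorem stmt12 (n : ℕ) (hn : 0 < n) (β : ℝ) (hβ0 : 0 < β)
    (hβ : β < Real.sqrt (Real.log 2 / 2)) :
    (∫ x, (freeEnergy n β x) ^ 2 ∂(gaussN n)) - (∫ x, freeEnergy n β x ∂(gaussN n)) ^ 2
      ≤ ((1 - β ^ 2) / (1 - 2 * β ^ 2)) * (1 / n) := by
  have hb : β ^ 2 < 1 / 2 := by
    have h1 := (Real.lt_sqrt hβ0.le).1 hβ
    have h2 := Real.log_two_lt_d9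
    linarith
  have hn' : (0 : ℝ) < 1 / n := by positivity
  have hd : 0 < 1 - 2 * β ^ 2 := by linarith
  have hd2 : 0 < 1 - β ^ 2 := by nlinarith
  by_cases hi : Integrable (fun x => freeEnergy n β x ^ 2) (gaussN n)
  · have hF : Measurable (freeEnergy n β) := by unfold freeEnergy; fun_prop
    have h1 := REM.varPoinc hF (fun i => REM.p_cont β i) (fun x i => REM.F_deriv β hβ0 x i) hi
      (integrable_finsetSum _ fun j _ => REM.p2_int β j)
    refine h1.trans ?_
    have h2 := REM.Q_bound hn β
    set Q := ∫ x, ∑ i, REM.p β i x ^ 2 ∂(gaussN n) with hQ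
    have h3 : Q ≤ (1 / n) / (1 - β ^ 2) := by
      rw [le_div_iff₀ hd2]; linarith
    refine h3.trans ?_
    rw [div_mul_eq_mul_div, div_le_div_iff₀ hd2 hd]
    nlinarith [mul_nonneg hn'.le (sq_nonneg (β ^ 2))]
  · rw [integral_undef hi]
    have : 0 ≤ ((1 - β ^ 2) / (1 - 2 * β ^ 2)) * (1 / (n : ℝ)) := by positivity
    nlinarith [sq_nonneg (∫ x, freeEnergy n β x ∂(gaussN n))]
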